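/- Let F be a field, let R, M ≥ 1 be integers, and let K = R·M. Let α_0, …, α_{K−1}, β_0, …, β_{R−1} be K+R pairwise distinct elements of F, and let u_0, …, u_{K−1}, v_0, …, v_{R−1} be nonzero elements of F. Define V_α ∈ F^{K×K} by (V_α)_{i,k} = α_k^i, V_β ∈ F^{K×R} by (V_β)_{i,r} = β_r^i, P = diag(u_0, …, u_{K−1}), Q = diag(v_0, …, v_{R−1}), and A = (V_α·P)^{−1}·V_β·Q ∈ F^{K×R}. Fix m ∈ {0, …, M−1} and set S_m = {mR, …, (m+1)R−1}. Let W_m ∈ F^{R×R} be the Vandermonde matrix (W_m)_{i,s} = α_{mR+s}^i for i, s ∈ {0, …, R−1}, let U ∈ F^{R×R} be the Vandermonde matrix (U)_{i,r} = β_r^i for i, r ∈ {0, …, R−1}, let Φ_m = diag(φ_{m,0}, …, φ_{m,R−1}) with φ_{m,s} = u_{mR+s} · ∏_{j ∈ {0,…,K−1}∖S_m} (α_{mR+s} − α_j), and let Ψ_m = diag(ψ_0, …, ψ_{R−1}) with ψ_r = v_r · ∏_{j ∈ {0,…,K−1}∖S_m} (β_r − α_j). Then the m-th row block A_m ∈ F^{R×R}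 of A, defined by (A_m)_{s,r} = A_{mR+s, r}, satisfies A_m = (W_m·Φ_m)^{−1}·U·Ψ_m. -/

import Mathlib

/-!
The entries of `A` are determined by `∑ k, α k ^ i * u k * A k r = β r ^ i * v r` for `i < R * M`.
Taking linear combinations over `i`, one may replace `x ^ i` by any polynomial in `x` of degree
below `R * M`, in particular by `x ^ i * p x` with `i < R` and `p` the monic polynomial whose roots
are the `α j` outside the `m`-th block. Only the terms of the `m`-th block then survive on the left,
and what remains is an `R × R` system with the same shape as the original one, with the values
of `p` absorbed into the weights.
-/

open Matrix Polynomial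

section PowerMatrix

variable {S κ : Type*}

/-- The Vandermonde-type matrix with `n` rows and one column per evaluation point `a k`. It is the
transpose of `Matrix.vandermonde`, and is allowed to be rectangular. -/
def powerMatrix [Monoid S] (n : ℕ) (a : κ → S) : Matrix (Fin n) κ S :=
  of fun i k => a k ^ (i : ℕ)

lemma eq_powerMatrix [Monoid S] {n : ℕ} {a : κ → S} {V : Matrix (Fin n) κ S}
    (hV : ∀ i k, V i k = a k ^ (i : ℕ)) : V = powerMatrix n a :=
  Matrix.ext hV

lemma isUnit_det_powerMatrix_mul_diagonal [Field S] {n : ℕ} {a w : Fin n → S}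
    (ha : Function.Injective a) (hw : ∀ k, w k ≠ 0) :
    IsUnit (powerMatrix n a * diagonal w).det := by
  have hdet : (powerMatrix n a).det ≠ 0 := by
    rw [← eq_powerMatrix (V := (vandermonde a)ᵀ) fun _ _ => rfl, det_transpose]
    exact det_vandermonde_ne_zero_iff.mpr ha
  rw [det_mul, det_diagonal, isUnit_iff_ne_zero]
  exact mul_ne_zero hdet (Finset.prod_ne_zero_iff.mpr fun k _ => hw k)

/-- The matrix of multiplication by `p` from polynomials of degree `< m` to polynomials of degree
`< n` in the monomial bases, acting on row vectors. Coefficients of degree `≥ n` are cut off. -/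
noncomputable def polynomialMulMatrix [Semiring S] (p : S[X]) (m n : ℕ) :
    Matrix (Fin m) (Fin n) S :=
  of fun i j => (X ^ (i : ℕ) * p).coeff j

lemma polynomialMulMatrix_mul_powerMatrix [CommSemiring S] [Fintype κ] [DecidableEq κ]
    {p : S[X]} {m n : ℕ} (hp : p.natDegree + m ≤ n) (a : κ → S) :
    polynomialMulMatrix p m n * powerMatrix n a =
      powerMatrix m a * diagonal fun k => p.eval (a k) := by
  ext i k
  have hdeg : (X ^ (i : ℕ) * p).natDegree < n := by
    have := natDegree_mul_le_of_le (natDegree_X_pow_le (R := S) (i : ℕ)) (le_refl p.natDegree)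
    omega
  calc (polynomialMulMatrix p m n * powerMatrix n a) i k
      = ∑ j : Fin n, (X ^ (i : ℕ) * p).coeff j * a k ^ (j : ℕ) := rfl
    _ = (X ^ (i : ℕ) * p).eval (a k) := by
        rw [eval_eq_sum_range' hdeg, Finset.sum_range]
    _ = (powerMatrix m a * diagonal fun k => p.eval (a k)) i k := by
        rw [eval_mul, eval_pow, eval_X, mul_diagonal, powerMatrix, of_apply]

end PowerMatrix

lemma mul_diagonal_mul_eq_submatrix {S ι κ l o : Type*} [NonUnitalSemiring S]
    [Fintype ι] [DecidableEq ι] [Fintype κ] [DecidableEq κ] {f : ι → κ}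
    (hf : Function.Injective f) {d : κ → S} (hd : ∀ k ∉ Set.range f, d k = 0)
    (B : Matrix l κ S) (C : Matrix κ o S) :
    B * diagonal d * C = B.submatrix id f * diagonal (d ∘ f) * C.submatrix f id := by
  ext i r
  simp only [mul_apply (M := _ * diagonal _), mul_diagonal]
  refine (Fintype.sum_of_injective f hf _ _ (fun k hk => ?_) fun _ => rfl).symm
  rw [hd k hk, mul_zero, zero_mul]

lemma powerMatrix_comp_mul_diagonal_mul_submatrix {S ι κ μ : Type*} [CommSemiring S]
    [Fintype ι] [DecidableEq ι] [Fintype κ] [DecidableEq κ] [Fintype μ] [DecidableEq μ]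
    {m n : ℕ} {α u : κ → S} {β v : μ → S} {A : Matrix κ μ S}
    (hA : powerMatrix n α * diagonal u * A = powerMatrix n β * diagonal v)
    {f : ι → κ} (hf : Function.Injective f)
    {p : S[X]} (hdeg : p.natDegree + m ≤ n) (hroot : ∀ k ∉ Set.range f, p.eval (α k) = 0) :
    powerMatrix m (α ∘ f) * diagonal (fun s => u (f s) * p.eval (α (f s))) * A.submatrix f id =
      powerMatrix m β * diagonal fun r => v r * p.eval (β r) := by
  have hvanish : ∀ k ∉ Set.range f, u k * p.eval (α k) = 0 := fun k hk => by
    rw [hroot k hk, mul_zero]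
  calc powerMatrix m (α ∘ f) * diagonal (fun s => u (f s) * p.eval (α (f s))) * A.submatrix f id
      = powerMatrix m α * diagonal (fun k => u k * p.eval (α k)) * A :=
        (mul_diagonal_mul_eq_submatrix hf hvanish (powerMatrix m α) A).symm
    _ = powerMatrix m α * diagonal (fun k => p.eval (α k)) * diagonal u * A := by
        simp only [Matrix.mul_assoc (powerMatrix m α), diagonal_mul_diagonal, mul_comm]
    _ = polynomialMulMatrix p m n * (powerMatrix n α * diagonal u * A) := by
        simp only [← polynomialMulMatrix_mul_powerMatrix hdeg, Matrix.mul_assoc]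
    _ = powerMatrix m β * diagonal (fun r => p.eval (β r)) * diagonal v := by
        rw [hA, ← Matrix.mul_assoc, polynomialMulMatrix_mul_powerMatrix hdeg]
    _ = powerMatrix m β * diagonal fun r => v r * p.eval (β r) := by
        simp only [Matrix.mul_assoc, diagonal_mul_diagonal, mul_comm]

theorem row_block_of_systematic_GRS_is_cauchy_like_general {F κ : Type*} [Field F]
    [Fintype κ] [DecidableEq κ] {n R : ℕ} {α u : Fin n → F}
    (hα : Function.Injective α) (hu : ∀ k, u k ≠ 0) (β v : κ → F)
    {idx : Fin R → Fin n} (hidx : Function.Injective idx) :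
    ((powerMatrix n α * diagonal u)⁻¹ * powerMatrix n β * diagonal v).submatrix idx id =
      (powerMatrix R (α ∘ idx) * diagonal fun s =>
          u (idx s) * ∏ j ∈ (Finset.univ.image idx)ᶜ, (α (idx s) - α j))⁻¹ *
        powerMatrix R β *
        diagonal fun r => v r * ∏ j ∈ (Finset.univ.image idx)ᶜ, (β r - α j) := by
  set T := (Finset.univ.image idx)ᶜ with hT
  have hmem : ∀ k, k ∈ T ↔ k ∉ Set.range idx := by simp [hT]
  have hdeg : (Lagrange.nodal T α).natDegree + R ≤ n := by
    have hcard : T.card + R = n := by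
      simpa [hT, Finset.card_image_of_injective _ hidx] using
        Finset.card_compl_add_card (Finset.univ.image idx)
    rw [Lagrange.natDegree_nodal, hcard]
  have hφ : ∀ s, u (idx s) * ∏ j ∈ T, (α (idx s) - α j) ≠ 0 := fun s =>
    mul_ne_zero (hu _) <| Finset.prod_ne_zero_iff.mpr fun j hj =>
      sub_ne_zero.mpr fun h => (hmem j).mp hj ⟨s, hα h⟩
  set A := (powerMatrix n α * diagonal u)⁻¹ * powerMatrix n β * diagonal v with hA
  have hsystem : powerMatrix n α * diagonal u * A = powerMatrix n β * diagonal v := by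
    rw [hA, Matrix.mul_assoc _⁻¹,
      mul_nonsing_inv_cancel_left _ _ (isUnit_det_powerMatrix_mul_diagonal hα hu)]
  have hblock := powerMatrix_comp_mul_diagonal_mul_submatrix hsystem hidx hdeg fun k hk =>
    Lagrange.eval_nodal_at_node ((hmem k).mpr hk)
  simp only [Lagrange.eval_nodal] at hblock
  rw [Matrix.mul_assoc, ← hblock,
    nonsing_inv_mul_cancel_left _ _ (isUnit_det_powerMatrix_mul_diagonal (hα.comp hidx) hφ)]

section ConsecutiveIndices

variable {R n c : ℕ} {idx : Fin R → Fin n}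

lemma injective_of_val_eq_add (hidx : ∀ s, (idx s : ℕ) = c + s) : Function.Injective idx :=
  fun s t hst => Fin.ext <| Nat.add_left_cancel <| by rw [← hidx, ← hidx, hst]

lemma filter_lt_or_add_le_eq_compl_image (hidx : ∀ s, (idx s : ℕ) = c + s) :
    Finset.univ.filter (fun j : Fin n => (j : ℕ) < c ∨ c + R ≤ (j : ℕ)) =
      (Finset.univ.image idx)ᶜ := by
  ext j
  simp only [Finset.mem_filter_univ, Finset.mem_compl, Finset.mem_image, Finset.mem_univ,
    true_and]
  constructor
  · rintro hj ⟨s, rfl⟩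
    have := hidx s
    omega
  · intro hj
    by_contra! hblock
    exact hj ⟨⟨j - c, by omega⟩, Fin.ext <| by simp only [hidx]; omega⟩

end ConsecutiveIndices

/-- Decomposition of the `m`-th `R × R` row block of the non-systematic
part `A = (V_α · P)⁻¹ · V_β · Q` of a systematic generalized Reed–Solomon generator matrix
(with `K = R·M`) as `A_m = (W_m · Φ_m)⁻¹ · U · Ψ_m`. -/
theorem row_block_of_systematic_GRS_is_cauchy_like
    (F : Type*) [Field F] (R M : ℕ) (hR : 1 ≤ R) (hM : 1 ≤ M)
    (α : Fin (R * M) → F) (β : Fin R → F)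
    (hdist : Function.Injective (Sum.elim α β))
    (u : Fin (R * M) → F) (v : Fin R → F)
    (hu : ∀ k, u k ≠ 0) (hv : ∀ r, v r ≠ 0)
    (Vα : Matrix (Fin (R * M)) (Fin (R * M)) F)
    (hVα : ∀ i k, Vα i k = α k ^ (i : ℕ))
    (Vβ : Matrix (Fin (R * M)) (Fin R) F)
    (hVβ : ∀ i r, Vβ i r = β r ^ (i : ℕ))
    (A : Matrix (Fin (R * M)) (Fin R) F)
    (hA : A = (Vα * Matrix.diagonal u)⁻¹ * Vβ * Matrix.diagonal v)
    (m : Fin M)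
    (idx : Fin R → Fin (R * M))
    (hidx : ∀ s : Fin R, (idx s : ℕ) = (m : ℕ) * R + (s : ℕ))
    (W : Matrix (Fin R) (Fin R) F)
    (hW : ∀ i s, W i s = α (idx s) ^ (i : ℕ))
    (U : Matrix (Fin R) (Fin R) F)
    (hU : ∀ i r, U i r = β r ^ (i : ℕ))
    (φ : Fin R → F)
    (hφ : ∀ s, φ s = u (idx s) *
      ∏ j ∈ Finset.univ.filter
          (fun j : Fin (R * M) => (j : ℕ) < (m : ℕ) * R ∨ (m : ℕ) * R + R ≤ (j : ℕ)),
        (α (idx s) - α j))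
    (ψ : Fin R → F)
    (hψ : ∀ r, ψ r = v r *
      ∏ j ∈ Finset.univ.filter
          (fun j : Fin (R * M) => (j : ℕ) < (m : ℕ) * R ∨ (m : ℕ) * R + R ≤ (j : ℕ)),
        (β r - α j))
    (Am : Matrix (Fin R) (Fin R) F)
    (hAm : ∀ s r, Am s r = A (idx s) r) :
    Am = (W * Matrix.diagonal φ)⁻¹ * U * Matrix.diagonal ψ := by
  rw [show Am = A.submatrix idx id from Matrix.ext hAm, hA, eq_powerMatrix hVα, eq_powerMatrix hVβ,
    eq_powerMatrix (a := α ∘ idx) hW, eq_powerMatrix hU, funext hφ, funext hψ,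
    filter_lt_or_add_le_eq_compl_image hidx]
  exact row_block_of_systematic_GRS_is_cauchy_like_general (hdist.comp Sum.inl_injective) hu β v
    (injective_of_val_eq_add hidx)
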